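/- With q = e^{-4π} and a = π^{1/4}/Γ(3/4), one has Γ_q(1/8) · Γ_q(3/8) · Γ_q(5/8) · Γ_q(7/8) = (1 - e^{-4π})² · a⁴ · 2^{-57/16} · e^{11π/16} · (√2 + 1)^{1/4}, where Γ denotes the classical gamma function. -/

import Mathlib

/-- Infinite q-Pochhammer symbol `(a; q)_∞ = ∏_{i=0}^∞ (1 - a qⁱ)` (real version). -/
noncomputable def qPochR (a q : ℝ) : ℝ := ∏' i : ℕ, (1 - a * q ^ i)

/-- The q-gamma function `Γ_q(z) = ((q;q)_∞ / (q^z;q)_∞) (1-q)^{1-z}` for `0 < q < 1`. -/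
noncomputable def qGamma (q z : ℝ) : ℝ :=
  qPochR q q / qPochR (q ^ z) q * (1 - q) ^ (1 - z)

/-!
The product over `z = 1/8, 3/8, 5/8, 7/8` collapses by the multiplication formula for `Γ_q`: with
`p = e^{-π}` it is `(1 - p ^ 4) ^ 2` times `(p⁴; p⁴)_∞ ^ 4 / (√p; p)_∞`, whose fourth power is, by
the triple product identity, rational in `p ^ (1 / 4)` and the theta constants `θ₂`, `θ₃`, `θ₄` at
nome `p`. There `θ₂ = θ₄`, since `p` is fixed by the imaginary transformation, and so Jacobi's
identity `θ₂⁴ + θ₄⁴ = θ₃⁴` leaves only `θ₃` to be found. The doubling formulas for `θ₃²` and `θ₄²`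
are an arithmetic-geometric mean step, whence `agm (θ₃², θ₄²) = 1`; since `θ₃² = √2 θ₄²` at `p`, it
remains to evaluate `agm (√2, 1)`, which Gauss's elliptic integral expresses as a beta value.
-/

open Filter Topology
open scoped NNReal

section QPochhammer

open Finset

variable {a q : ℝ}

lemma multipliable_one_sub_mul_pow (a : ℝ) (hq : |q| < 1) :
    Multipliable fun i : ℕ => 1 - a * q ^ i := by
  simpa [sub_eq_add_neg] using
    multipliable_one_add_of_summable ((summable_geometric_of_abs_lt_one hq).mul_left a).neg.norm

lemma tendsto_prod_range_qPochR (a : ℝ) (hq : |q| < 1) :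
    Tendsto (fun n => ∏ i ∈ range n, (1 - a * q ^ i)) atTop (𝓝 (qPochR a q)) :=
  (multipliable_one_sub_mul_pow a hq).hasProd.tendsto_prod_nat

lemma qPochR_pos (ha : |a| < 1) (hq : |q| < 1) : 0 < qPochR a q := by
  have hfactor (i : ℕ) : 0 < 1 - a * q ^ i := by
    refine sub_pos.2 ((le_abs_self _).trans_lt ?_)
    rw [abs_mul, abs_pow]
    exact (mul_le_of_le_one_right (abs_nonneg a) (pow_le_one₀ (abs_nonneg q) hq.le)).trans_lt ha
  have hlog : Summable fun i : ℕ => Real.log (1 - a * q ^ i) := by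
    simpa [sub_eq_add_neg] using Real.summable_log_one_add_of_summable
      ((summable_geometric_of_abs_lt_one hq).mul_left a).neg
  rw [qPochR, ← Real.rexp_tsum_eq_tprod hfactor hlog]
  exact Real.exp_pos _

lemma prod_range_mul_qPochR (a : ℝ) (hq : |q| < 1) (n : ℕ) :
    (∏ i ∈ range n, (1 - a * q ^ i)) * qPochR (a * q ^ n) q = qPochR a q := by
  have hshift (i : ℕ) : 1 - a * q ^ n * q ^ i = 1 - a * q ^ (i + n) := by ring
  have h := multipliable_one_sub_mul_pow (a * q ^ n) hq
  simp only [qPochR, hshift] at h ⊢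
  exact h.prod_mul_tprod_nat_mul'

lemma qPochR_eq_one_sub_mul (a : ℝ) (hq : |q| < 1) :
    qPochR a q = (1 - a) * qPochR (a * q) q := by
  simpa using (prod_range_mul_qPochR a hq 1).symm

lemma tendsto_qPochR_mul_pow (ha : |a| < 1) (hq : |q| < 1) :
    Tendsto (fun n : ℕ => qPochR (a * q ^ n) q) atTop (𝓝 1) := by
  have hpos := (qPochR_pos ha hq).ne'
  have h := (tendsto_prod_range_qPochR a hq).inv₀ hpos |>.const_mul (qPochR a q)
  rw [mul_inv_cancel₀ hpos] at h
  refine h.congr fun n => ?_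
  have hn := prod_range_mul_qPochR a hq n
  rw [← hn, mul_comm, inv_mul_cancel_left₀]
  exact left_ne_zero_of_mul (hn ▸ hpos)

lemma qPochR_mul_qPochR_neg (a : ℝ) (hq : |q| < 1) :
    qPochR a q * qPochR (-a) q = qPochR (a ^ 2) (q ^ 2) := by
  rw [qPochR, qPochR, qPochR, ← (multipliable_one_sub_mul_pow a hq).tprod_mul
    (multipliable_one_sub_mul_pow (-a) hq)]
  exact tprod_congr fun i => by ring

lemma abs_pow_lt_one (hq : |q| < 1) {n : ℕ} (hn : n ≠ 0) : |q ^ n| < 1 := by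
  rw [abs_pow]
  exact pow_lt_one₀ (abs_nonneg q) hq hn

lemma prod_range_qPochR_mul_pow (a : ℝ) (hq : |q| < 1) {m : ℕ} (hm : m ≠ 0) :
    ∏ k ∈ range m, qPochR (a * q ^ k) (q ^ m) = qPochR a q := by
  refine tendsto_nhds_unique (tendsto_finsetProd _ fun k _ =>
    tendsto_prod_range_qPochR (a * q ^ k) (abs_pow_lt_one hq hm)) ?_
  refine ((tendsto_prod_range_qPochR a hq).comp
    (tendsto_id.const_mul_atTop' (Nat.pos_of_ne_zero hm))).congr fun N => ?_
  simp only [Function.comp_apply, id]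
  induction N with
  | zero => simp
  | succ N ih =>
    simp only [mul_add_one, prod_range_add, prod_range_succ _ N, prod_mul_distrib, ih]
    congr 1
    exact prod_congr rfl fun k _ => by ring

lemma qPochR_zpow_eq_mul (hq0 : 0 < q) (hq1 : q < 1) (m : ℤ) :
    qPochR (q ^ m) q = (1 - q ^ m) * qPochR (q ^ (m + 1)) q := by
  rw [zpow_add_one₀ hq0.ne']
  exact qPochR_eq_one_sub_mul _ (abs_lt.2 ⟨by linarith, hq1⟩)

lemma qPochR_zpow_of_nonpos (hq0 : 0 < q) (hq1 : q < 1) {m : ℤ} (hm : m ≤ 0) :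
    qPochR (q ^ m) q = 0 := by
  induction m, hm using Int.leInductionDown with
  | base =>
    rw [qPochR_zpow_eq_mul hq0 hq1 0]
    simp
  | pred m _ ih => rw [qPochR_zpow_eq_mul hq0 hq1, sub_add_cancel, ih, mul_zero]

lemma qPochR_zpow_pos (hq0 : 0 < q) (hq1 : q < 1) {m : ℤ} (hm : 0 < m) :
    0 < qPochR (q ^ m) q := by
  have hpow : q ^ m < 1 := zpow_lt_one₀ hq0 hq1 hm
  exact qPochR_pos (by rwa [abs_of_pos (zpow_pos hq0 m)]) (by rwa [abs_of_pos hq0])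

lemma qPochR_zpow_nonneg (hq0 : 0 < q) (hq1 : q < 1) (m : ℤ) : 0 ≤ qPochR (q ^ m) q := by
  rcases le_or_gt m 0 with hm | hm
  · exact (qPochR_zpow_of_nonpos hq0 hq1 hm).ge
  · exact (qPochR_zpow_pos hq0 hq1 hm).le

lemma monotone_qPochR_zpow (hq0 : 0 < q) (hq1 : q < 1) :
    Monotone fun m : ℤ => qPochR (q ^ m) q :=
  monotone_int_of_le_succ fun m => by
    rw [qPochR_zpow_eq_mul hq0 hq1 m]
    exact mul_le_of_le_one_left (qPochR_zpow_nonneg hq0 hq1 _)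
      (sub_le_self 1 (zpow_pos hq0 m).le)

lemma tendsto_qPochR_zpow (hq0 : 0 < q) (hq1 : q < 1) :
    Tendsto (fun m : ℤ => qPochR (q ^ m) q) atTop (𝓝 1) := by
  have hq : |q| < 1 := by rwa [abs_of_pos hq0]
  rw [← Nat.map_cast_int_atTop, tendsto_map'_iff, ← tendsto_add_atTop_iff_nat 1]
  refine (tendsto_qPochR_mul_pow hq hq).congr fun n => ?_
  simp only [Function.comp_apply, zpow_natCast, pow_succ']

lemma qPochR_zpow_le_one (hq0 : 0 < q) (hq1 : q < 1) (m : ℤ) : qPochR (q ^ m) q ≤ 1 :=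
  (monotone_qPochR_zpow hq0 hq1).ge_of_tendsto (tendsto_qPochR_zpow hq0 hq1) m

end QPochhammer

section TripleProduct

open Finset

/-- The Gaussian binomial coefficient `[a + b; a]` with parameter `Q`, used for `0 ≤ a + b`. Its
`Q`-factorials are written as quotients of infinite products, so that it vanishes when `a` or `b`
is negative. -/
noncomputable def qBinom (Q : ℝ) (a b : ℤ) : ℝ :=
  qPochR (Q ^ (a + 1)) Q * qPochR (Q ^ (b + 1)) Q / (qPochR Q Q * qPochR (Q ^ (a + b + 1)) Q)

variable {Q q z : ℝ}

lemma qBinom_comm (Q : ℝ) (a b : ℤ) : qBinom Q a b = qBinom Q b a := by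
  rw [qBinom, qBinom, mul_comm (qPochR (Q ^ (a + 1)) Q), add_comm a b]

lemma qBinom_zero_zero (hQ0 : 0 < Q) (hQ1 : Q < 1) : qBinom Q 0 0 = 1 := by
  have hQ : |Q| < 1 := by rwa [abs_of_pos hQ0]
  simpa [qBinom] using div_self (mul_self_ne_zero.2 (qPochR_pos hQ hQ).ne')

lemma qBinom_of_left_neg (hQ0 : 0 < Q) (hQ1 : Q < 1) {a : ℤ} (ha : a < 0) (b : ℤ) :
    qBinom Q a b = 0 := by
  simp [qBinom, qPochR_zpow_of_nonpos hQ0 hQ1 (Int.add_one_le_iff.2 ha)]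

lemma qBinom_pascal (hQ0 : 0 < Q) (hQ1 : Q < 1) {a b : ℤ} (hab : 0 < a + b) :
    qBinom Q a b = qBinom Q a (b - 1) + Q ^ b * qBinom Q (a - 1) b := by
  have hfirst : qPochR Q Q ≠ 0 := by simpa using (qPochR_zpow_pos hQ0 hQ1 one_pos).ne'
  have hlast : qPochR (Q ^ (a + b)) Q ≠ 0 := (qPochR_zpow_pos hQ0 hQ1 hab).ne'
  simp only [qBinom, sub_add_cancel, ← add_sub_assoc, sub_add_eq_add_sub]
  rw [qPochR_zpow_eq_mul hQ0 hQ1 (a + b), mul_ne_zero_iff] at hlast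
  obtain ⟨hfactor, htail⟩ := hlast
  rw [qPochR_zpow_eq_mul hQ0 hQ1 (a + b), qPochR_zpow_eq_mul hQ0 hQ1 a,
    qPochR_zpow_eq_mul hQ0 hQ1 b]
  have hpow : Q ^ (a + b) = Q ^ a * Q ^ b := zpow_add₀ hQ0.ne' a b
  generalize hC : 1 - Q ^ (a + b) = C at *
  field_simp
  rw [← hC, hpow]
  ring

lemma qBinom_pascal_twice (hQ0 : 0 < Q) (hQ1 : Q < 1) {a b : ℤ} (hab : 1 < a + b) :
    qBinom Q a b = Q ^ a * qBinom Q a (b - 2) + (1 + Q ^ (a + b - 1)) * qBinom Q (a - 1) (b - 1) +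
      Q ^ b * qBinom Q (a - 2) b := by
  have hleft : qBinom Q a (b - 1) = qBinom Q (a - 1) (b - 1) + Q ^ a * qBinom Q a (b - 2) := by
    rw [qBinom_comm, qBinom_pascal hQ0 hQ1 (by lia), qBinom_comm, qBinom_comm Q (b - 1 - 1)]
    ring_nf
  have hright : qBinom Q (a - 1) b =
      qBinom Q (a - 2) b + Q ^ (a - 1) * qBinom Q (a - 1) (b - 1) := by
    rw [qBinom_comm, qBinom_pascal hQ0 hQ1 (by lia), qBinom_comm, qBinom_comm Q (b - 1)]
    ring_nf
  have hpow : Q ^ (a + b - 1) = Q ^ b * Q ^ (a - 1) := by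
    rw [← zpow_add₀ hQ0.ne']
    ring_nf
  rw [qBinom_pascal hQ0 hQ1 (by lia), hleft, hright, hpow]
  ring

lemma qBinom_nonneg (hQ0 : 0 < Q) (hQ1 : Q < 1) (a b : ℤ) : 0 ≤ qBinom Q a b := by
  have hnonneg := qPochR_zpow_nonneg hQ0 hQ1
  have hfirst : 0 ≤ qPochR Q Q := by simpa using hnonneg 1
  exact div_nonneg (mul_nonneg (hnonneg _) (hnonneg _)) (mul_nonneg hfirst (hnonneg _))

lemma qBinom_le (hQ0 : 0 < Q) (hQ1 : Q < 1) {a b : ℤ} (hab : 0 ≤ a + b) :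
    qBinom Q a b ≤ (qPochR Q Q * qPochR Q Q)⁻¹ := by
  have hfirst : 0 < qPochR Q Q := by simpa using qPochR_zpow_pos hQ0 hQ1 one_pos
  have hlast : qPochR Q Q ≤ qPochR (Q ^ (a + b + 1)) Q := by
    simpa using monotone_qPochR_zpow hQ0 hQ1 (show (1 : ℤ) ≤ a + b + 1 by lia)
  rw [qBinom, ← one_div]
  gcongr
  exact mul_le_one₀ (qPochR_zpow_le_one hQ0 hQ1 _) (qPochR_zpow_nonneg hQ0 hQ1 _)
    (qPochR_zpow_le_one hQ0 hQ1 _)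

lemma tendsto_qBinom (hQ0 : 0 < Q) (hQ1 : Q < 1) (k : ℤ) :
    Tendsto (fun N : ℕ => qBinom Q (N - k) (N + k)) atTop (𝓝 (qPochR Q Q)⁻¹) := by
  have hlim {f : ℕ → ℤ} (hf : ∀ N : ℕ, N - |k| ≤ f N) :
      Tendsto (fun N => qPochR (Q ^ f N) Q) atTop (𝓝 1) :=
    (tendsto_qPochR_zpow hQ0 hQ1).comp <| tendsto_atTop_mono hf
      (tendsto_atTop_add_const_right _ (-|k|) tendsto_natCast_atTop_atTop)
  have hfirst : qPochR Q Q ≠ 0 := by simpa using (qPochR_zpow_pos hQ0 hQ1 one_pos).ne'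
  have h := ((hlim fun N => show (N : ℤ) - |k| ≤ N - k + 1 by grind).mul
    (hlim fun N => show (N : ℤ) - |k| ≤ N + k + 1 by grind)).div
    ((hlim fun N => show (N : ℤ) - |k| ≤ N - k + (N + k) + 1 by grind).const_mul (qPochR Q Q))
    (by simpa)
  simpa [qBinom, Pi.div_def] using h

lemma qBinom_tripleProduct_succ (hq0 : q ≠ 0) (hq : |q| < 1) (hz : z ≠ 0) (N : ℕ) (k : ℤ) :
    qBinom (q ^ 2) ((N + 1 : ℕ) - k) ((N + 1 : ℕ) + k) * (q ^ (k ^ 2) * z ^ k) =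
      (1 + q ^ (4 * N + 2)) * (qBinom (q ^ 2) (N - k) (N + k) * (q ^ (k ^ 2) * z ^ k)) +
      z * q ^ (2 * N + 1) *
        (qBinom (q ^ 2) (N - (k - 1)) (N + (k - 1)) * (q ^ ((k - 1) ^ 2) * z ^ (k - 1))) +
      z⁻¹ * q ^ (2 * N + 1) *
        (qBinom (q ^ 2) (N - (k + 1)) (N + (k + 1)) * (q ^ ((k + 1) ^ 2) * z ^ (k + 1))) := by
  have hQ0 : 0 < q ^ 2 := by positivity
  have hQ1 : q ^ 2 < 1 := (sq_lt_one_iff_abs_lt_one q).2 hq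
  have hsq (m : ℤ) : (q ^ 2) ^ m = q ^ (2 * m) := by rw [zpow_mul]; rfl
  have hprev : (q ^ 2) ^ (N + 1 - k) * q ^ (k ^ 2) = q ^ (2 * N + 1) * q ^ ((k - 1) ^ 2) := by
    rw [hsq, ← zpow_natCast q, ← zpow_add₀ hq0, ← zpow_add₀ hq0]
    push_cast
    ring_nf
  have hnext : (q ^ 2) ^ (N + 1 + k) * q ^ (k ^ 2) = q ^ (2 * N + 1) * q ^ ((k + 1) ^ 2) := by
    rw [hsq, ← zpow_natCast q, ← zpow_add₀ hq0, ← zpow_add₀ hq0]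
    push_cast
    ring_nf
  have hmid : (q ^ 2) ^ ((N + 1 - k : ℤ) + (N + 1 + k) - 1) = q ^ (4 * N + 2) := by
    rw [hsq, ← zpow_natCast q]
    push_cast
    ring_nf
  push_cast
  rw [qBinom_pascal_twice hQ0 hQ1 (by lia), hmid, zpow_sub_one₀ hz, zpow_add_one₀ hz,
    show (N + 1 - k - 1 : ℤ) = N - k by ring, show (N + 1 + k - 1 : ℤ) = N + k by ring,
    show (N + 1 + k - 2 : ℤ) = N + (k - 1) by ring, show (N + 1 - k - 2 : ℤ) = N - (k + 1) by ring,
    show (N - (k - 1) : ℤ) = N + 1 - k by ring, show (N + (k + 1) : ℤ) = N + 1 + k by ring]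
  field_simp
  linear_combination qBinom (q ^ 2) (N + 1 - k) (N + (k - 1)) * hprev +
    qBinom (q ^ 2) (N - (k + 1)) (N + 1 + k) * hnext

lemma hasSum_qBinom_tripleProduct (hq0 : q ≠ 0) (hq : |q| < 1) (hz : z ≠ 0) (N : ℕ) :
    HasSum (fun k : ℤ => qBinom (q ^ 2) (N - k) (N + k) * (q ^ (k ^ 2) * z ^ k))
      (∏ n ∈ range N, ((1 + z * q ^ (2 * n + 1)) * (1 + z⁻¹ * q ^ (2 * n + 1)))) := by
  have hQ0 : 0 < q ^ 2 := by positivity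
  have hQ1 : q ^ 2 < 1 := (sq_lt_one_iff_abs_lt_one q).2 hq
  induction N with
  | zero =>
    have hzero (k : ℤ) (hk : k ≠ 0) :
        qBinom (q ^ 2) ((0 : ℕ) - k) ((0 : ℕ) + k) * (q ^ (k ^ 2) * z ^ k) = 0 := by
      rcases hk.lt_or_gt with h | h
      · rw [qBinom_comm, qBinom_of_left_neg hQ0 hQ1 (by lia), zero_mul]
      · rw [qBinom_of_left_neg hQ0 hQ1 (by lia), zero_mul]
    simpa [qBinom_zero_zero hQ0 hQ1] using hasSum_single 0 hzero
  | succ N ih =>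
    have hfactor (c : ℝ) : c * ((1 + z * q ^ (2 * N + 1)) * (1 + z⁻¹ * q ^ (2 * N + 1))) =
        (1 + q ^ (4 * N + 2)) * c + z * q ^ (2 * N + 1) * c + z⁻¹ * q ^ (2 * N + 1) * c := by
      field_simp
      ring
    have hprev := (Equiv.subRight (1 : ℤ)).hasSum_iff.2 ih
    have hnext := (Equiv.addRight (1 : ℤ)).hasSum_iff.2 ih
    rw [funext (qBinom_tripleProduct_succ hq0 hq hz N), prod_range_succ, hfactor]
    exact ((ih.mul_left _).add (hprev.mul_left _)).add (hnext.mul_left _)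

lemma summable_tripleProduct (hq : |q| < 1) (hz : z ≠ 0) :
    Summable fun k : ℤ => q ^ (k ^ 2) * z ^ k := by
  rcases eq_or_ne q 0 with rfl | hq0
  · exact summable_of_ne_finset_zero (s := {0}) fun k hk => by
      rw [zero_zpow _ (pow_ne_zero 2 (by simpa using hk)), zero_mul]
  have hnat {w : ℝ} (hw : w ≠ 0) : Summable fun n : ℕ => q ^ (n ^ 2) * w ^ n := by
    refine summable_of_ratio_test_tendsto_lt_one zero_lt_one
      (.of_forall fun n => by positivity) ?_
    have hlim : Tendsto (fun n : ℕ => ‖q * w * (q ^ 2) ^ n‖) atTop (𝓝 ‖q * w * 0‖) :=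
      ((tendsto_pow_atTop_nhds_zero_of_abs_lt_one (abs_pow_lt_one hq two_ne_zero)).const_mul
        _).norm
    rw [mul_zero, norm_zero] at hlim
    refine hlim.congr fun n => ?_
    rw [← norm_div]
    congr 1
    field_simp
    ring
  refine Summable.of_nat_of_neg ?_ ?_
  · exact_mod_cast hnat hz
  · simpa only [neg_sq, zpow_neg, ← inv_zpow] using mod_cast hnat (inv_ne_zero hz)

lemma tendsto_prod_range_tripleProduct (hq : |q| < 1) (z : ℝ) :
    Tendsto (fun N => ∏ n ∈ range N, (1 + z * q ^ (2 * n + 1))) atTop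
      (𝓝 (qPochR (-(z * q)) (q ^ 2))) := by
  refine (tendsto_prod_range_qPochR _ (abs_pow_lt_one hq two_ne_zero)).congr fun N => ?_
  exact prod_congr rfl fun n _ => by ring

/-- Let `N → ∞` in the finite form, by dominated convergence. -/
theorem jacobi_tripleProduct (hq : |q| < 1) (hz : z ≠ 0) :
    ∑' k : ℤ, q ^ (k ^ 2) * z ^ k =
      qPochR (q ^ 2) (q ^ 2) * qPochR (-(z * q)) (q ^ 2) * qPochR (-(z⁻¹ * q)) (q ^ 2) := by
  rcases eq_or_ne q 0 with rfl | hq0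
  · rw [tsum_eq_single 0 fun k hk => by rw [zero_zpow _ (pow_ne_zero 2 hk), zero_mul]]
    simp [qPochR]
  have hQ0 : 0 < q ^ 2 := by positivity
  have hQ1 : q ^ 2 < 1 := (sq_lt_one_iff_abs_lt_one q).2 hq
  have hP : qPochR (q ^ 2) (q ^ 2) ≠ 0 :=
    (qPochR_pos (abs_pow_lt_one hq two_ne_zero) (abs_pow_lt_one hq two_ne_zero)).ne'
  have hprod := (tendsto_prod_range_tripleProduct hq z).mul
    (tendsto_prod_range_tripleProduct hq z⁻¹)
  simp only [← prod_mul_distrib] at hprod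
  have hsum : Tendsto (fun N : ℕ => ∑' k : ℤ, qBinom (q ^ 2) (N - k) (N + k) *
      (q ^ (k ^ 2) * z ^ k)) atTop
      (𝓝 (∑' k : ℤ, (qPochR (q ^ 2) (q ^ 2))⁻¹ * (q ^ (k ^ 2) * z ^ k))) := by
    refine tendsto_tsum_of_dominated_convergence
      ((summable_tripleProduct hq hz).norm.mul_left
        (qPochR (q ^ 2) (q ^ 2) * qPochR (q ^ 2) (q ^ 2))⁻¹)
      (fun k => (tendsto_qBinom hQ0 hQ1 k).mul_const _) (.of_forall fun N k => ?_)
    rw [norm_mul, Real.norm_of_nonneg (qBinom_nonneg hQ0 hQ1 _ _)]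
    exact mul_le_mul_of_nonneg_right (qBinom_le hQ0 hQ1 (by lia)) (norm_nonneg _)
  simp only [fun N => (hasSum_qBinom_tripleProduct hq0 hq hz N).tsum_eq, tsum_mul_left] at hsum
  rw [mul_assoc, ← tendsto_nhds_unique hsum hprod, mul_inv_cancel_left₀ hP]

end TripleProduct

section Theta

open Finset

/-- Jacobi's theta constant `θ₃` as a function of the nome `q`. Its value at `-q` is `θ₄(q)`. -/
noncomputable def thetaThree (q : ℝ) : ℝ := ∑' n : ℤ, q ^ (n ^ 2)

/-- Jacobi's theta constant `θ₂` as a function of the nome `q`. -/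
noncomputable def thetaTwo (q : ℝ) : ℝ := ∑' n : ℤ, q ^ ((n + 1 / 2 : ℝ) ^ 2)

variable {q : ℝ}

lemma summable_thetaThree (hq : |q| < 1) : Summable fun n : ℤ => q ^ (n ^ 2) := by
  simpa using summable_tripleProduct hq one_ne_zero

lemma thetaThree_eq_qPochR (hq : |q| < 1) :
    thetaThree q = qPochR (q ^ 2) (q ^ 2) * qPochR (-q) (q ^ 2) ^ 2 := by
  simpa [thetaThree, sq, mul_assoc] using jacobi_tripleProduct hq one_ne_zero

lemma thetaThree_pos (hq : |q| < 1) : 0 < thetaThree q := by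
  have hq2 := abs_pow_lt_one hq two_ne_zero
  rw [thetaThree_eq_qPochR hq]
  exact mul_pos (qPochR_pos hq2 hq2) (pow_pos (qPochR_pos (by rwa [abs_neg]) hq2) 2)

lemma thetaThree_neg_mul_qPochR (hq : |q| < 1) :
    thetaThree (-q) * qPochR (q ^ 2) (q ^ 2) = qPochR q q ^ 2 := by
  have hsplit := prod_range_qPochR_mul_pow q hq two_ne_zero
  rw [thetaThree_eq_qPochR (by rwa [abs_neg]), neg_neg, neg_sq, ← hsplit]
  simp only [prod_range_succ, prod_range_zero]
  ring_nf

lemma thetaTwo_eq_rpow_mul_tsum (hq0 : 0 < q) :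
    thetaTwo q = q ^ (1 / 4 : ℝ) * ∑' n : ℤ, q ^ (n ^ 2) * q ^ n := by
  rw [thetaTwo, ← tsum_mul_left]
  refine tsum_congr fun n => ?_
  rw [← Real.rpow_intCast, ← Real.rpow_intCast, ← Real.rpow_add hq0, ← Real.rpow_add hq0]
  push_cast
  ring_nf

lemma thetaTwo_mul_qPochR (hq0 : 0 < q) (hq1 : q < 1) :
    thetaTwo q * qPochR (q ^ 2) (q ^ 2) = 2 * q ^ (1 / 4 : ℝ) * qPochR (q ^ 4) (q ^ 4) ^ 2 := by
  have hq : |q| < 1 := by rwa [abs_of_pos hq0]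
  have hdouble := qPochR_mul_qPochR_neg (q ^ 2) (abs_pow_lt_one hq two_ne_zero)
  have hone := qPochR_eq_one_sub_mul (-1) (abs_pow_lt_one hq two_ne_zero)
  rw [thetaTwo_eq_rpow_mul_tsum hq0, jacobi_tripleProduct hq hq0.ne', inv_mul_cancel₀ hq0.ne',
    hone, neg_one_mul, ← sq, show q ^ 4 = (q ^ 2) ^ 2 by ring, ← hdouble]
  ring

lemma thetaThree_add_thetaThree_neg (hq : |q| < 1) :
    thetaThree q + thetaThree (-q) = 2 * thetaThree (q ^ 4) := by
  rw [thetaThree, thetaThree, thetaThree, ← tsum_mul_left,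
    ← (summable_thetaThree hq).tsum_add (summable_thetaThree (by rwa [abs_neg]))]
  have hinj : Function.Injective fun n : ℤ => 2 * n := mul_right_injective₀ two_ne_zero
  rw [← hinj.tsum_eq]
  · refine tsum_congr fun n => ?_
    rw [((even_two_mul n).pow_of_ne_zero two_ne_zero).neg_zpow, ← zpow_natCast q 4, ← zpow_mul]
    push_cast
    ring_nf
  · refine fun n hn => Set.mem_range.2 ?_
    rcases Int.even_or_odd n with ⟨m, rfl⟩ | h
    · exact ⟨m, two_mul m⟩
    · simp [(h.pow (n := 2)).neg_zpow] at hn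

lemma thetaThree_sub_thetaThree_neg (hq0 : 0 < q) (hq1 : q < 1) :
    thetaThree q - thetaThree (-q) = 2 * thetaTwo (q ^ 4) := by
  have hq : |q| < 1 := by rwa [abs_of_pos hq0]
  rw [thetaThree, thetaThree, thetaTwo, ← tsum_mul_left,
    ← (summable_thetaThree hq).tsum_sub (summable_thetaThree (by rwa [abs_neg]))]
  have hinj : Function.Injective fun n : ℤ => 2 * n + 1 :=
    (add_left_injective 1).comp (mul_right_injective₀ two_ne_zero)
  rw [← hinj.tsum_eq]
  · refine tsum_congr fun n => ?_
    rw [((odd_two_mul_add_one n).pow (n := 2)).neg_zpow, ← Real.rpow_intCast,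
      ← Real.rpow_natCast q 4, ← Real.rpow_mul hq0.le]
    push_cast
    ring_nf
  · refine fun n hn => Set.mem_range.2 ?_
    rcases Int.even_or_odd n with h | ⟨m, rfl⟩
    · simp [(h.pow_of_ne_zero two_ne_zero).neg_zpow] at hn
    · exact ⟨m, rfl⟩

/-- The map `(m, n) ↦ (m + n, m - n)` is a bijection of `ℤ × ℤ` onto the pairs of equal parity. -/
lemma tsum_eq_tsum_add_sub {f : ℤ × ℤ → ℝ} (hf : ∀ p : ℤ × ℤ, Odd (p.1 + p.2) → f p = 0) :
    ∑' p, f p = ∑' p : ℤ × ℤ, f (p.1 + p.2, p.1 - p.2) := by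
  have hinj : Function.Injective fun p : ℤ × ℤ => (p.1 + p.2, p.1 - p.2) := by
    rintro ⟨a, b⟩ ⟨c, d⟩ h
    simp only [Prod.mk.injEq] at h ⊢
    lia
  refine (hinj.tsum_eq fun p hp => ?_).symm
  rcases Int.even_or_odd (p.1 + p.2) with ⟨m, hm⟩ | h
  · exact ⟨(m, p.1 - m), by simp only [Prod.ext_iff]; lia⟩
  · exact absurd (hf p h) hp

lemma hasSum_thetaThree_sq (hq : |q| < 1) :
    HasSum (fun p : ℤ × ℤ => q ^ (p.1 ^ 2 + p.2 ^ 2)) (thetaThree q ^ 2) := by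
  have hsummable := (summable_thetaThree hq).norm
  have h := (summable_mul_of_summable_norm hsummable hsummable).hasSum
  rw [← tsum_mul_tsum_of_summable_norm hsummable hsummable, ← thetaThree, ← sq] at h
  refine h.congr_fun fun p => zpow_add' ?_
  rcases eq_or_ne (p.1 ^ 2 + p.2 ^ 2) 0 with hp | hp
  · exact .inr (.inr ((add_eq_zero_iff_of_nonneg (sq_nonneg _) (sq_nonneg _)).1 hp))
  · exact .inr (.inl hp)

lemma thetaThree_sq_add_thetaThree_neg_sq (hq : |q| < 1) :
    thetaThree q ^ 2 + thetaThree (-q) ^ 2 = 2 * thetaThree (q ^ 2) ^ 2 := by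
  rw [← ((hasSum_thetaThree_sq hq).add (hasSum_thetaThree_sq (by rwa [abs_neg]))).tsum_eq,
    ← ((hasSum_thetaThree_sq (abs_pow_lt_one hq two_ne_zero)).mul_left 2).tsum_eq,
    tsum_eq_tsum_add_sub]
  · refine tsum_congr fun p => ?_
    have hexp : (p.1 + p.2) ^ 2 + (p.1 - p.2) ^ 2 = 2 * (p.1 ^ 2 + p.2 ^ 2) := by ring
    simp only [hexp, (even_two_mul _).neg_zpow, zpow_mul, ← two_mul]
    norm_cast
  · intro p hp
    have hodd : Odd (p.1 ^ 2 + p.2 ^ 2) := by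
      simpa [Int.odd_add, Int.odd_pow, Int.even_pow] using hp
    rw [hodd.neg_zpow, add_neg_cancel]

lemma thetaThree_mul_thetaThree_neg (hq : |q| < 1) :
    thetaThree q * thetaThree (-q) = thetaThree (-q ^ 2) ^ 2 := by
  have hsq := thetaThree_sq_add_thetaThree_neg_sq hq
  have hsq' := thetaThree_sq_add_thetaThree_neg_sq (abs_pow_lt_one hq two_ne_zero)
  rw [← pow_mul] at hsq'
  linear_combination (thetaThree q + thetaThree (-q) + 2 * thetaThree (q ^ 4)) / 2 *
    thetaThree_add_thetaThree_neg hq - hsq / 2 - hsq'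

lemma thetaThree_sq_sub_thetaThree_neg_sq (hq0 : 0 < q) (hq1 : q < 1) :
    thetaThree q ^ 2 - thetaThree (-q) ^ 2 = 2 * thetaTwo (q ^ 2) ^ 2 := by
  obtain ⟨s, hs0, rfl⟩ : ∃ s : ℝ, 0 < s ∧ s ^ 2 = q :=
    ⟨√q, Real.sqrt_pos.2 hq0, Real.sq_sqrt hq0.le⟩
  have hs1 : s < 1 := by nlinarith
  have hs : |s| < 1 := by rwa [abs_of_pos hs0]
  have hsub := thetaThree_sub_thetaThree_neg hs0 hs1
  have hsq := thetaThree_sq_add_thetaThree_neg_sq hs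
  have hmul := thetaThree_mul_thetaThree_neg hs
  rw [← pow_mul]
  linear_combination (thetaThree s - thetaThree (-s) + 2 * thetaTwo (s ^ 4)) / 2 * hsub -
    hsq / 2 + hmul

lemma thetaThree_neg_sq (hq0 : 0 < q) (hq1 : q < 1) :
    thetaThree (-q) ^ 2 = thetaThree (q ^ 2) ^ 2 - thetaTwo (q ^ 2) ^ 2 := by
  have hadd := thetaThree_sq_add_thetaThree_neg_sq (q := q) (by rwa [abs_of_pos hq0])
  have hsub := thetaThree_sq_sub_thetaThree_neg_sq hq0 hq1
  linear_combination (hadd - hsub) / 2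

theorem jacobi_thetaTwo_thetaThree (hq0 : 0 < q) (hq1 : q < 1) :
    thetaTwo q ^ 4 + thetaThree (-q) ^ 4 = thetaThree q ^ 4 := by
  obtain ⟨s, hs0, rfl⟩ : ∃ s : ℝ, 0 < s ∧ s ^ 2 = q :=
    ⟨√q, Real.sqrt_pos.2 hq0, Real.sq_sqrt hq0.le⟩
  have hs1 : s < 1 := by nlinarith
  have hadd := thetaThree_sq_add_thetaThree_neg_sq (q := s) (by rwa [abs_of_pos hs0])
  have hsub := thetaThree_sq_sub_thetaThree_neg_sq hs0 hs1
  have hmul := thetaThree_mul_thetaThree_neg (q := s) (by rwa [abs_of_pos hs0])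
  have hmul2 : thetaThree s ^ 2 * thetaThree (-s) ^ 2 = thetaThree (-s ^ 2) ^ 4 := by
    rw [← mul_pow, hmul, ← pow_mul]
  have hthree : thetaThree s ^ 2 = thetaThree (s ^ 2) ^ 2 + thetaTwo (s ^ 2) ^ 2 := by
    linear_combination (hadd + hsub) / 2
  rw [← hmul2, hthree, thetaThree_neg_sq hs0 hs1]
  ring

lemma tendsto_thetaThree_zero : Tendsto thetaThree (𝓝 0) (𝓝 1) := by
  have hzero : thetaThree 0 = 1 := by
    rw [thetaThree, tsum_eq_single 0 fun n hn => zero_zpow _ (pow_ne_zero 2 hn)]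
    simp
  rw [← hzero]
  refine tendsto_tsum_of_dominated_convergence
    (summable_thetaThree (q := 1 / 2) (by norm_num [abs_of_pos]))
    (fun n => continuousAt_zpow₀ 0 _ (.inr (sq_nonneg n))) ?_
  filter_upwards [Metric.ball_mem_nhds (0 : ℝ) one_half_pos] with q hq n
  rw [mem_ball_zero_iff] at hq
  rw [norm_zpow]
  exact zpow_le_zpow_left₀ (sq_nonneg n) (norm_nonneg q) hq.le

lemma thetaThree_exp_neg_pi_mul {t : ℝ} (ht : 0 < t) :
    thetaThree (Real.exp (-Real.pi * t)) = (√t)⁻¹ * thetaThree (Real.exp (-Real.pi / t)) := by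
  have h (s : ℝ) : thetaThree (Real.exp s) = ∑' n : ℤ, Real.exp (s * (n : ℝ) ^ 2) :=
    tsum_congr fun n => by
      rw [← Real.rpow_intCast, ← Real.exp_mul]
      push_cast
      rfl
  rw [h, h, Real.tsum_exp_neg_mul_int_sq ht, Real.sqrt_eq_rpow, one_div]

lemma thetaTwo_exp_neg_pi_mul {t : ℝ} (ht : 0 < t) :
    thetaTwo (Real.exp (-Real.pi * t)) = (√t)⁻¹ * thetaThree (-Real.exp (-Real.pi / t)) := by
  set q := Real.exp (-Real.pi * (t / 4)) with hq
  set r := Real.exp (-Real.pi / t) with hr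
  have hq0 : 0 < q := Real.exp_pos _
  have hq1 : q < 1 := by
    rw [hq, Real.exp_lt_one_iff]
    nlinarith [Real.pi_pos]
  have hr1 : r < 1 := by
    rw [hr, Real.exp_lt_one_iff]
    exact div_neg_of_neg_of_pos (neg_neg_of_pos Real.pi_pos) ht
  have hq4 : Real.exp (-Real.pi * t) = q ^ 4 := by
    rw [hq, ← Real.exp_nat_mul]
    push_cast
    ring_nf
  have hr4 : Real.exp (-Real.pi / (t / 4)) = r ^ 4 := by
    rw [hr, ← Real.exp_nat_mul]
    push_cast
    field_simp
  have hsqrt : √(t / 4) = √t / 2 := by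
    rw [Real.sqrt_div' _ (by norm_num), show (4 : ℝ) = 2 ^ 2 by norm_num, Real.sqrt_sq two_pos.le]
  have hthree := thetaThree_exp_neg_pi_mul ht
  have hthree' := thetaThree_exp_neg_pi_mul (div_pos ht four_pos)
  have hsub := thetaThree_sub_thetaThree_neg hq0 hq1
  have hadd := thetaThree_add_thetaThree_neg (q := q) (by rwa [abs_of_pos hq0])
  have hadd' := thetaThree_add_thetaThree_neg (q := r) (by rwa [abs_of_pos (Real.exp_pos _)])
  rw [hq4, ← hr] at hthree
  rw [← hq, hr4, hsqrt, inv_div] at hthree'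
  rw [hq4]
  linear_combination -(hadd + hsub) / 2 + hthree' - hthree - (√t)⁻¹ * hadd'

end Theta

section EllipticIntegral

open MeasureTheory Set

/-- The integrand of the symmetric complete elliptic integral `ellipticIntegral`. -/
noncomputable def ellipticIntegrand (a b s : ℝ) : ℝ := (√((s ^ 2 + a ^ 2) * (s ^ 2 + b ^ 2)))⁻¹

/-- The symmetric complete elliptic integral of the first kind, taken over the whole real line: it
is twice the integral over `(0, ∞)` by which it is often defined. -/
noncomputable def ellipticIntegral (a b : ℝ) : ℝ := ∫ s, ellipticIntegrand a b s

lemma ellipticIntegral_eq_two_mul (a b : ℝ) :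
    ellipticIntegral a b = 2 * ∫ s in Ioi 0, ellipticIntegrand a b s := by
  rw [← integral_comp_abs]
  simp only [ellipticIntegral, ellipticIntegrand, sq_abs]

section GaussTransformation

variable {c : ℝ}

lemma hasDerivAt_sub_div_div_two {x : ℝ} (hx : x ≠ 0) :
    HasDerivAt (fun x => (x - c / x) / 2) ((1 + c / x ^ 2) / 2) x := by
  refine (((hasDerivAt_id x).sub ((hasDerivAt_inv hx).const_mul c)).div_const 2).congr_deriv ?_
  ring

lemma bijOn_sub_div_div_two (hc : 0 < c) :
    BijOn (fun x : ℝ => (x - c / x) / 2) (Ioi 0) univ := by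
  refine ⟨mapsTo_univ _ _, fun x (hx : 0 < x) y (hy : 0 < y) h => ?_, fun y _ => ?_⟩
  · have hxy : (x - y) * (x * y + c) = 0 := by
      field_simp at h
      linear_combination h
    exact sub_eq_zero.1 ((mul_eq_zero.1 hxy).resolve_right (by positivity))
  · have hpos : 0 < y + √(y ^ 2 + c) := by
      have := (Real.lt_sqrt (abs_nonneg y)).2 (show |y| ^ 2 < y ^ 2 + c by rw [sq_abs]; linarith)
      linarith [neg_abs_le y]
    refine ⟨y + √(y ^ 2 + c), hpos, ?_⟩
    field_simp
    linear_combination Real.sq_sqrt (show 0 ≤ y ^ 2 + c by positivity)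

lemma integral_eq_integral_Ioi_comp_sub_div (hc : 0 < c) (g : ℝ → ℝ) :
    ∫ y, g y = ∫ x in Ioi 0, (1 + c / x ^ 2) / 2 * g ((x - c / x) / 2) := by
  have hbij := bijOn_sub_div_div_two hc
  rw [← setIntegral_univ, ← hbij.image_eq,
    integral_image_eq_integral_abs_deriv_smul measurableSet_Ioi
      (fun x hx => (hasDerivAt_sub_div_div_two (ne_of_gt hx)).hasDerivWithinAt) hbij.injOn]
  refine setIntegral_congr_fun measurableSet_Ioi fun x (hx : 0 < x) => ?_
  simp only [smul_eq_mul]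
  rw [abs_of_pos (by positivity)]

end GaussTransformation

variable {a b : ℝ}

lemma ellipticIntegral_sqrt_mul_half_add (ha : 0 < a) (hb : 0 < b) :
    ellipticIntegral √(a * b) ((a + b) / 2) = ellipticIntegral a b := by
  rw [ellipticIntegral, integral_eq_integral_Ioi_comp_sub_div (mul_pos ha hb),
    ellipticIntegral_eq_two_mul, ← integral_const_mul]
  refine setIntegral_congr_fun measurableSet_Ioi fun x (hx : 0 < x) => ?_
  have hpos : 0 < (1 + a * b / x ^ 2) / 4 := by positivity
  have hfactor : (((x - a * b / x) / 2) ^ 2 + √(a * b) ^ 2) *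
      (((x - a * b / x) / 2) ^ 2 + ((a + b) / 2) ^ 2) =
      (x ^ 2 + a ^ 2) * (x ^ 2 + b ^ 2) * ((1 + a * b / x ^ 2) / 4) ^ 2 := by
    rw [Real.sq_sqrt (by positivity)]
    field_simp
    ring
  simp only [ellipticIntegrand]
  rw [hfactor, Real.sqrt_mul (by positivity), Real.sqrt_sq hpos.le]
  field_simp
  norm_num

lemma inv_sq_add_sq_eq (ha : a ≠ 0) (s : ℝ) :
    (s ^ 2 + a ^ 2)⁻¹ = (a ^ 2)⁻¹ * (1 + (s / a) ^ 2)⁻¹ := by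
  field_simp
  ring

lemma ellipticIntegrand_self (a s : ℝ) :
    ellipticIntegrand a a s = (s ^ 2 + a ^ 2)⁻¹ := by
  rw [ellipticIntegrand, Real.sqrt_mul_self (by positivity)]

lemma integrable_ellipticIntegrand_self (ha : a ≠ 0) : Integrable (ellipticIntegrand a a) := by
  simp only [funext (ellipticIntegrand_self a), inv_sq_add_sq_eq ha]
  exact (integrable_inv_one_add_sq.comp_div ha).const_mul _

lemma ellipticIntegral_self (ha : 0 < a) : ellipticIntegral a a = Real.pi / a := by
  simp only [ellipticIntegral, ellipticIntegrand_self, inv_sq_add_sq_eq ha.ne']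
  rw [integral_const_mul, Measure.integral_comp_div (fun s : ℝ => (1 + s ^ 2)⁻¹),
    integral_univ_inv_one_add_sq, abs_of_pos ha, smul_eq_mul]
  field_simp

lemma ellipticIntegrand_nonneg (a b s : ℝ) : 0 ≤ ellipticIntegrand a b s :=
  inv_nonneg.2 (Real.sqrt_nonneg _)

lemma ellipticIntegrand_anti {a' b' : ℝ} (ha : 0 < a) (hb : 0 < b) (haa' : a ≤ a')
    (hbb' : b ≤ b') (s : ℝ) : ellipticIntegrand a' b' s ≤ ellipticIntegrand a b s := by
  unfold ellipticIntegrand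
  gcongr

lemma integrable_ellipticIntegrand (ha : 0 < a) (hb : 0 < b) :
    Integrable (ellipticIntegrand a b) := by
  have hmin := lt_min ha hb
  have hmeas : Measurable (ellipticIntegrand a b) := by
    unfold ellipticIntegrand
    fun_prop
  refine (integrable_ellipticIntegrand_self hmin.ne').mono' hmeas.aestronglyMeasurable
    (.of_forall fun s => ?_)
  rw [Real.norm_of_nonneg (ellipticIntegrand_nonneg a b s)]
  exact ellipticIntegrand_anti hmin hmin (min_le_left a b) (min_le_right a b) s

lemma ellipticIntegral_anti {a' b' : ℝ} (ha : 0 < a) (hb : 0 < b) (haa' : a ≤ a')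
    (hbb' : b ≤ b') : ellipticIntegral a' b' ≤ ellipticIntegral a b :=
  integral_mono (integrable_ellipticIntegrand (ha.trans_le haa') (hb.trans_le hbb'))
    (integrable_ellipticIntegrand ha hb) (ellipticIntegrand_anti ha hb haa' hbb')

section AGM

open NNReal

variable {x y : ℝ≥0}

lemma ellipticIntegral_agmSequences (hx : 0 < x) (hy : 0 < y) (n : ℕ) :
    ellipticIntegral (agmSequences x y n).1 (agmSequences x y n).2 = ellipticIntegral x y := by
  have hstep {x y : ℝ≥0} (hx : 0 < x) (hy : 0 < y) :
      ellipticIntegral (sqrt (x * y)) ((x + y) / 2 : ℝ≥0) = ellipticIntegral x y := by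
    simpa using ellipticIntegral_sqrt_mul_half_add (NNReal.coe_pos.2 hx) (NNReal.coe_pos.2 hy)
  induction n generalizing x y with
  | zero => exact hstep hx hy
  | succ n ih => rw [agmSequences_succ, ih (by positivity) (by positivity), hstep hx hy]

theorem ellipticIntegral_eq_pi_div_agm (hx : 0 < x) (hy : 0 < y) :
    ellipticIntegral x y = Real.pi / agm x y := by
  have hfst (n : ℕ) : (0 : ℝ) < (agmSequences x y n).1 := by
    have hzero : 0 < (agmSequences x y 0).1 := sqrt_pos.2 (mul_pos hx hy)
    exact hzero.trans_le (agmSequences_fst_monotone n.zero_le)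
  have hle (n : ℕ) : ((agmSequences x y n).1 : ℝ) ≤ (agmSequences x y n).2 :=
    agmSequences_fst_le_snd n n
  have hsnd (n : ℕ) := (hfst n).trans_le (hle n)
  have hagm : (agm x y : ℝ) ≠ 0 := (NNReal.coe_pos.2 (agm_pos hx hy)).ne'
  have hlower (n : ℕ) : Real.pi / (agmSequences x y n).2 ≤ ellipticIntegral x y := by
    rw [← ellipticIntegral_agmSequences hx hy n, ← ellipticIntegral_self (hsnd n)]
    exact ellipticIntegral_anti (hfst n) (hsnd n) (hle n) le_rfl
  have hupper (n : ℕ) : ellipticIntegral x y ≤ Real.pi / (agmSequences x y n).1 := by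
    rw [← ellipticIntegral_agmSequences hx hy n, ← ellipticIntegral_self (hfst n)]
    exact ellipticIntegral_anti (hfst n) (hfst n) le_rfl (hle n)
  have hlim_fst : Tendsto (fun n => Real.pi / ((agmSequences x y n).1 : ℝ)) atTop
      (𝓝 (Real.pi / agm x y)) :=
    tendsto_const_nhds.div (tendsto_coe.2 tendsto_agmSequences_fst_agm) hagm
  have hlim_snd : Tendsto (fun n => Real.pi / ((agmSequences x y n).2 : ℝ)) atTop
      (𝓝 (Real.pi / agm x y)) :=
    tendsto_const_nhds.div (tendsto_coe.2 tendsto_agmSequences_snd_agm) hagm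
  exact le_antisymm (ge_of_tendsto' hlim_fst hupper) (le_of_tendsto' hlim_snd hlower)

end AGM

end EllipticIntegral

section GaussConstant

open MeasureTheory Set

lemma beta_eq_setIntegral {α β : ℝ} (hα : 0 < α) (hβ : 0 < β) :
    ProbabilityTheory.beta α β = ∫ x in Ioo (0 : ℝ) 1, x ^ (α - 1) * (1 - x) ^ (β - 1) := by
  have hofReal : ∀ x ∈ Ioo (0 : ℝ) 1, (x : ℂ) ^ ((α : ℂ) - 1) * (1 - x) ^ ((β : ℂ) - 1) =
      ((x ^ (α - 1) * (1 - x) ^ (β - 1) : ℝ) : ℂ) := fun x ⟨hx0, hx1⟩ => by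
    push_cast [Complex.ofReal_cpow hx0.le, Complex.ofReal_cpow (sub_nonneg.2 hx1.le)]
    rfl
  rw [ProbabilityTheory.beta_eq_betaIntegralReal α β hα hβ, Complex.betaIntegral,
    intervalIntegral.integral_of_le zero_le_one, integral_Ioc_eq_integral_Ioo,
    setIntegral_congr_fun measurableSet_Ioo hofReal, integral_complex_ofReal, Complex.ofReal_re]

lemma hasDerivAt_inv_one_add_sq_sq (s : ℝ) :
    HasDerivAt (fun s : ℝ => ((1 + s ^ 2) ^ 2)⁻¹) (-(4 * s * ((1 + s ^ 2) ^ 3)⁻¹)) s := by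
  have hpos : 0 < 1 + s ^ 2 := by positivity
  have h := ((((hasDerivAt_id s).pow 2).const_add 1).pow 2).inv (pow_pos hpos 2).ne'
  refine h.congr_deriv ?_
  simp only [Pi.pow_apply, id_eq]
  field_simp
  ring

lemma bijOn_inv_one_add_sq_sq :
    BijOn (fun s : ℝ => ((1 + s ^ 2) ^ 2)⁻¹) (Ioi 0) (Ioo 0 1) := by
  refine ⟨fun s (hs : 0 < s) => ⟨by positivity, inv_lt_one_of_one_lt₀ ?_⟩,
    fun x (hx : 0 < x) y (hy : 0 < y) h => ?_, fun v ⟨hv0, hv1⟩ => ?_⟩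
  · exact one_lt_pow₀ (by linarith [pow_pos hs 2]) two_ne_zero
  · have h' := (pow_left_inj₀ (by positivity) (by positivity) two_ne_zero).1 (inv_injective h)
    exact (pow_left_inj₀ hx.le hy.le two_ne_zero).1 (add_left_cancel h')
  · have hpos : 0 < (√v)⁻¹ - 1 :=
      sub_pos.2 ((one_lt_inv₀ (Real.sqrt_pos.2 hv0)).2 ((Real.sqrt_lt' one_pos).2 (by simpa)))
    refine ⟨√((√v)⁻¹ - 1), Real.sqrt_pos.2 hpos, ?_⟩
    simp only [Real.sq_sqrt hpos.le, add_sub_cancel, inv_pow, Real.sq_sqrt hv0.le, inv_inv]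

lemma inv_one_add_sq_sq_rpow (s : ℝ) :
    (((1 + s ^ 2) ^ 2)⁻¹) ^ ((1 / 4 : ℝ) - 1) = (1 + s ^ 2) * √(1 + s ^ 2) := by
  have hpos : 0 < 1 + s ^ 2 := by positivity
  rw [Real.sqrt_eq_rpow, ← Real.rpow_one_add' hpos.le (by norm_num), ← Real.rpow_natCast,
    ← Real.rpow_neg hpos.le, ← Real.rpow_mul hpos.le]
  norm_num

lemma one_sub_inv_one_add_sq_sq_rpow {s : ℝ} (hs : 0 < s) :
    (1 - ((1 + s ^ 2) ^ 2)⁻¹) ^ ((1 / 2 : ℝ) - 1) = (1 + s ^ 2) / (s * √(s ^ 2 + 2)) := by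
  have hsq : 1 - ((1 + s ^ 2) ^ 2)⁻¹ = (s * √(s ^ 2 + 2) / (1 + s ^ 2)) ^ 2 := by
    rw [div_pow, mul_pow, Real.sq_sqrt (by positivity)]
    field_simp
    ring
  rw [hsq, show (1 / 2 : ℝ) - 1 = -(1 / 2) by norm_num, Real.rpow_neg (by positivity),
    ← Real.sqrt_eq_rpow, Real.sqrt_sq (by positivity), inv_div]

lemma two_mul_ellipticIntegral_sqrt_two_one :
    2 * ellipticIntegral √2 1 = ProbabilityTheory.beta (1 / 4) (1 / 2) := by
  have hbij := bijOn_inv_one_add_sq_sq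
  rw [beta_eq_setIntegral (by norm_num) (by norm_num), ← hbij.image_eq,
    integral_image_eq_integral_abs_deriv_smul measurableSet_Ioi
      (fun s _ => (hasDerivAt_inv_one_add_sq_sq s).hasDerivWithinAt) hbij.injOn,
    ellipticIntegral_eq_two_mul, ← integral_const_mul, ← integral_const_mul]
  refine setIntegral_congr_fun measurableSet_Ioi fun s (hs : 0 < s) => ?_
  have hpos : 0 < 1 + s ^ 2 := by positivity
  simp only [smul_eq_mul]
  rw [inv_one_add_sq_sq_rpow, one_sub_inv_one_add_sq_sq_rpow hs, abs_neg,
    abs_of_pos (by positivity), ellipticIntegrand, Real.sq_sqrt zero_le_two, one_pow,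
    add_comm (s ^ 2) 1, Real.sqrt_mul (by positivity)]
  have hsqrt := Real.sq_sqrt hpos.le
  field_simp
  rw [hsqrt]
  norm_num [mul_comm]

lemma beta_one_fourth_one_half :
    ProbabilityTheory.beta (1 / 4) (1 / 2) * Real.Gamma (3 / 4) ^ 2 =
      √2 * Real.pi * √Real.pi := by
  have : Real.Gamma (3 / 4) ≠ 0 := (Real.Gamma_pos_of_pos (by norm_num)).ne'
  have hreflection := Real.Gamma_mul_Gamma_one_sub (1 / 4)
  rw [show (1 : ℝ) - 1 / 4 = 3 / 4 by norm_num, mul_one_div, Real.sin_pi_div_four] at hreflection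
  rw [ProbabilityTheory.beta, show (1 / 4 : ℝ) + 1 / 2 = 3 / 4 by norm_num, Real.Gamma_one_half_eq]
  field_simp at hreflection ⊢
  linear_combination √2 / 2 * hreflection -
    Real.Gamma (1 / 4) * Real.Gamma (3 / 4) / 2 * Real.sq_sqrt zero_le_two

theorem agm_sqrt_two_one :
    (NNReal.agm (NNReal.sqrt 2) 1 : ℝ) = √2 * Real.Gamma (3 / 4) ^ 2 / √Real.pi := by
  set M : ℝ := (NNReal.agm (NNReal.sqrt 2) 1 : ℝ)
  have hpos : 0 < M := NNReal.coe_pos.2 (NNReal.agm_pos (by simp) one_pos)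
  have hagm : ellipticIntegral √2 1 = Real.pi / M := by
    simpa using ellipticIntegral_eq_pi_div_agm (x := NNReal.sqrt 2) (y := 1) (by simp) one_pos
  have hgamma := beta_one_fourth_one_half
  rw [← two_mul_ellipticIntegral_sqrt_two_one, hagm] at hgamma
  rw [eq_div_iff (by positivity)]
  field_simp at hgamma
  linear_combination -√2 / 2 * hgamma - M * √Real.pi / 2 * Real.sq_sqrt zero_le_two

end GaussConstant

section ThetaAGM

open NNReal

variable {q : ℝ}

lemma agm_thetaThree_sq_comp_sq (hq : |q| < 1) :
    agm (‖thetaThree q‖₊ ^ 2) (‖thetaThree (-q)‖₊ ^ 2) =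
      agm (‖thetaThree (q ^ 2)‖₊ ^ 2) (‖thetaThree (-q ^ 2)‖₊ ^ 2) := by
  have hgm : sqrt (‖thetaThree q‖₊ ^ 2 * ‖thetaThree (-q)‖₊ ^ 2) =
      ‖thetaThree (-q ^ 2)‖₊ ^ 2 := by
    rw [← mul_pow, sqrt_sq, ← nnnorm_mul, thetaThree_mul_thetaThree_neg hq, nnnorm_pow]
  have ham : (‖thetaThree q‖₊ ^ 2 + ‖thetaThree (-q)‖₊ ^ 2) / 2 = ‖thetaThree (q ^ 2)‖₊ ^ 2 := by
    rw [div_eq_iff two_ne_zero, mul_comm]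
    ext
    simpa using thetaThree_sq_add_thetaThree_neg_sq hq
  rw [agm_eq_agm_gm_am, hgm, ham, agm_comm]

theorem agm_thetaThree_sq (hq : |q| < 1) :
    agm (‖thetaThree q‖₊ ^ 2) (‖thetaThree (-q)‖₊ ^ 2) = 1 := by
  have hinvariant (n : ℕ) : agm (‖thetaThree (q ^ 2 ^ n)‖₊ ^ 2) (‖thetaThree (-q ^ 2 ^ n)‖₊ ^ 2) =
      agm (‖thetaThree q‖₊ ^ 2) (‖thetaThree (-q)‖₊ ^ 2) := by
    induction n with
    | zero => simp
    | succ n ih =>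
      rw [← ih, pow_succ 2 n, pow_mul, agm_thetaThree_sq_comp_sq
        (abs_pow_lt_one hq (pow_ne_zero n two_ne_zero))]
  have hpow : Tendsto (fun n : ℕ => q ^ 2 ^ n) atTop (𝓝 0) :=
    (tendsto_pow_atTop_nhds_zero_of_abs_lt_one hq).comp
      (tendsto_pow_atTop_atTop_of_one_lt one_lt_two)
  have hpow_neg : Tendsto (fun n : ℕ => -q ^ 2 ^ n) atTop (𝓝 0) := by simpa using hpow.neg
  have htheta {f : ℕ → ℝ} (hf : Tendsto f atTop (𝓝 0)) :
      Tendsto (fun n => ‖thetaThree (f n)‖₊ ^ 2) atTop (𝓝 1) := by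
    simpa using (tendsto_thetaThree_zero.comp hf).nnnorm.pow 2
  have hmin := (htheta hpow).min (htheta hpow_neg)
  have hmax := (htheta hpow).max (htheta hpow_neg)
  rw [min_self] at hmin
  rw [max_self] at hmax
  exact le_antisymm (ge_of_tendsto' hmax fun n => hinvariant n ▸ agm_le_max)
    (le_of_tendsto' hmin fun n => hinvariant n ▸ min_le_agm)

end ThetaAGM

section LemniscaticNome

lemma exp_neg_pi_lt_one : Real.exp (-Real.pi) < 1 :=
  Real.exp_lt_one_iff.2 (neg_neg_of_pos Real.pi_pos)

lemma abs_exp_neg_pi_lt_one : |Real.exp (-Real.pi)| < 1 := by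
  rw [Real.abs_exp]
  exact exp_neg_pi_lt_one

lemma thetaTwo_exp_neg_pi :
    thetaTwo (Real.exp (-Real.pi)) = thetaThree (-Real.exp (-Real.pi)) := by
  simpa using thetaTwo_exp_neg_pi_mul one_pos

lemma thetaThree_exp_neg_pi_eq_rpow_mul :
    thetaThree (Real.exp (-Real.pi)) = 2 ^ (1 / 4 : ℝ) * thetaThree (-Real.exp (-Real.pi)) := by
  have hpos : 0 < thetaThree (-Real.exp (-Real.pi)) :=
    thetaThree_pos (by rw [abs_neg]; exact abs_exp_neg_pi_lt_one)
  refine (pow_left_inj₀ (thetaThree_pos abs_exp_neg_pi_lt_one).le (by positivity) four_ne_zero).1 ?_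
  rw [← jacobi_thetaTwo_thetaThree (Real.exp_pos _) exp_neg_pi_lt_one, thetaTwo_exp_neg_pi, mul_pow,
    ← Real.rpow_mul_natCast zero_le_two]
  norm_num
  ring

lemma thetaThree_exp_neg_pi_sq :
    thetaThree (Real.exp (-Real.pi)) ^ 2 = √2 * thetaThree (-Real.exp (-Real.pi)) ^ 2 := by
  rw [thetaThree_exp_neg_pi_eq_rpow_mul, mul_pow, ← Real.rpow_mul_natCast zero_le_two,
    Real.sqrt_eq_rpow]
  norm_num

theorem thetaThree_exp_neg_pi :
    thetaThree (Real.exp (-Real.pi)) = Real.pi ^ (1 / 4 : ℝ) / Real.Gamma (3 / 4) := by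
  have hsq := thetaThree_exp_neg_pi_sq
  have hpos := thetaThree_pos abs_exp_neg_pi_lt_one
  have hone := agm_thetaThree_sq abs_exp_neg_pi_lt_one
  set a := thetaThree (Real.exp (-Real.pi))
  set b := thetaThree (-Real.exp (-Real.pi))
  have hagm : b ^ 2 * (NNReal.agm (NNReal.sqrt 2) 1 : ℝ) = 1 := by
    have hscale : ‖a‖₊ ^ 2 = ‖b‖₊ ^ 2 * NNReal.sqrt 2 := by
      ext
      simpa [mul_comm] using hsq
    have hnnreal : ‖b‖₊ ^ 2 * NNReal.agm (NNReal.sqrt 2) 1 = 1 := by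
      rw [← NNReal.agm_mul_distrib, mul_one, ← hscale, hone]
    simpa using congrArg NNReal.toReal hnnreal
  have hG := Real.Gamma_pos_of_pos (show (0 : ℝ) < 3 / 4 by norm_num)
  have hpi : (Real.pi ^ (1 / 4 : ℝ)) ^ 2 = √Real.pi := by
    rw [← Real.rpow_mul_natCast Real.pi_pos.le, Real.sqrt_eq_rpow]
    norm_num
  refine (pow_left_inj₀ hpos.le (by positivity) two_ne_zero).1 ?_
  rw [agm_sqrt_two_one] at hagm
  rw [div_pow, hpi, hsq]
  field_simp at hagm ⊢
  linear_combination hagm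

end LemniscaticNome

section QGammaProduct

open Finset

variable {q : ℝ}

theorem prod_range_qGamma_add_div (hq0 : 0 < q) (hq1 : q < 1) {m : ℕ} (hm : m ≠ 0) (z : ℝ) :
    ∏ k ∈ range m, qGamma q (z + k / m) =
      qPochR q q ^ m / qPochR (q ^ z) (q ^ (1 / m : ℝ)) *
        (1 - q) ^ (m - m * z - (m - 1) / 2 : ℝ) := by
  have hm' : (m : ℝ) ≠ 0 := Nat.cast_ne_zero.2 hm
  set r := q ^ (1 / m : ℝ) with hr
  have hr1 : |r| < 1 := by
    rw [abs_of_pos (Real.rpow_pos_of_pos hq0 _)]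
    exact Real.rpow_lt_one hq0.le hq1 (by positivity)
  have hrm : r ^ m = q := by
    rw [hr, ← Real.rpow_mul_natCast hq0.le, one_div_mul_cancel hm', Real.rpow_one]
  have hpow (k : ℕ) : q ^ (z + k / m) = q ^ z * r ^ k := by
    rw [Real.rpow_add hq0, hr, ← Real.rpow_mul_natCast hq0.le, one_div_mul_eq_div]
  have hexponent : ∑ k ∈ range m, (1 - (z + k / m)) = m - m * z - (m - 1) / 2 := by
    have hgauss : ∑ k ∈ range m, (k : ℝ) = m * (m - 1) / 2 := by
      rw [← Nat.cast_sum, sum_range_id, ← Nat.choose_two_right, Nat.cast_choose_two]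
    simp only [sum_sub_distrib, sum_add_distrib, ← sum_div, hgauss, sum_const, card_range,
      nsmul_eq_mul]
    field_simp
    ring
  have hpoch : ∏ k ∈ range m, qPochR (q ^ (z + k / m)) q = qPochR (q ^ z) r := by
    simp only [hpow, ← prod_range_qPochR_mul_pow (q ^ z) hr1 hm, hrm]
  simp only [qGamma, prod_mul_distrib, prod_div_distrib, prod_const, card_range, hpoch,
    ← Real.rpow_sum_of_pos (sub_pos.2 hq1), hexponent]

lemma abs_sqrt_lt_one (hq1 : q < 1) : |√q| < 1 := by
  rw [abs_of_nonneg (Real.sqrt_nonneg q)]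
  exact (Real.sqrt_lt' one_pos).2 (by simpa)

lemma thetaThree_mul_qPochR_sq_mul_qPochR_sq (hq : |q| < 1) :
    thetaThree q * qPochR q q ^ 2 * qPochR (q ^ 4) (q ^ 4) ^ 2 = qPochR (q ^ 2) (q ^ 2) ^ 5 := by
  have hneg := thetaThree_neg_mul_qPochR hq
  have hneg_sq := thetaThree_neg_mul_qPochR (abs_pow_lt_one hq two_ne_zero)
  rw [← pow_mul] at hneg_sq
  refine mul_left_cancel₀ (thetaThree_pos (q := -q) (by rwa [abs_neg])).ne' ?_
  calc
    thetaThree (-q) * (thetaThree q * qPochR q q ^ 2 * qPochR (q ^ 4) (q ^ 4) ^ 2)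
    _ = thetaThree q * thetaThree (-q) * qPochR (q ^ 4) (q ^ 4) ^ 2 * qPochR q q ^ 2 := by ring
    _ = (thetaThree (-q ^ 2) * qPochR (q ^ 4) (q ^ 4)) ^ 2 * qPochR q q ^ 2 := by
      rw [thetaThree_mul_thetaThree_neg hq, mul_pow]
    _ = thetaThree (-q) * qPochR (q ^ 2) (q ^ 2) ^ 5 := by
      rw [hneg_sq, ← hneg]
      ring

lemma qPochR_sqrt_pow_four_mul_qPochR_sq (hq0 : 0 < q) (hq1 : q < 1) :
    qPochR √q q ^ 4 * qPochR q q ^ 2 = thetaThree q ^ 2 - thetaTwo q ^ 2 := by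
  have hq : |q| < 1 := by rwa [abs_of_pos hq0]
  have hs0 := Real.sqrt_pos.2 hq0
  have hs : |√q| < 1 := abs_sqrt_lt_one hq1
  have hsq : √q ^ 2 = q := Real.sq_sqrt hq0.le
  have hsplit : qPochR √q q * qPochR q q = qPochR √q √q := by
    simpa [prod_range_succ, ← sq, hsq] using prod_range_qPochR_mul_pow √q hs two_ne_zero
  have htheta : thetaThree (-√q) = qPochR √q q ^ 2 * qPochR q q := by
    have hneg := thetaThree_neg_mul_qPochR hs
    rw [hsq, ← hsplit] at hneg
    refine mul_right_cancel₀ (qPochR_pos hq hq).ne' ?_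
    linear_combination hneg
  have hneg_sq := thetaThree_neg_sq hs0 (lt_of_abs_lt hs)
  rw [hsq] at hneg_sq
  rw [← hneg_sq, htheta]
  ring

lemma qPochR_pow_four_div_pow_four (hq0 : 0 < q) (hq1 : q < 1) :
    (qPochR (q ^ 4) (q ^ 4) ^ 4 / qPochR √q q) ^ 4 =
      thetaThree q ^ 3 * thetaThree (-q) ^ 4 * thetaTwo q ^ 11 /
        (2 ^ 11 * q ^ (11 / 4 : ℝ) * (thetaThree q ^ 2 - thetaTwo q ^ 2)) := by
  have hq : |q| < 1 := by rwa [abs_of_pos hq0]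
  have hpos {n : ℕ} (hn : n ≠ 0) : 0 < qPochR (q ^ n) (q ^ n) :=
    qPochR_pos (abs_pow_lt_one hq hn) (abs_pow_lt_one hq hn)
  have h1 : 0 < qPochR q q := by simpa using hpos one_ne_zero
  have h2 := hpos two_ne_zero
  have h4 := hpos four_ne_zero
  have hS : 0 < qPochR √q q := qPochR_pos (abs_sqrt_lt_one hq1) hq
  have hpow : q ^ (11 / 4 : ℝ) = (q ^ (1 / 4 : ℝ)) ^ 11 := by
    rw [← Real.rpow_mul_natCast hq0.le]
    norm_num
  have hthree : thetaThree q = qPochR (q ^ 2) (q ^ 2) ^ 5 /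
      (qPochR q q ^ 2 * qPochR (q ^ 4) (q ^ 4) ^ 2) := by
    rw [eq_div_iff (by positivity), ← mul_assoc, thetaThree_mul_qPochR_sq_mul_qPochR_sq hq]
  have hfour := eq_div_of_mul_eq h2.ne' (thetaThree_neg_mul_qPochR hq)
  have htwo := eq_div_of_mul_eq h2.ne' (thetaTwo_mul_qPochR hq0 hq1)
  rw [← qPochR_sqrt_pow_four_mul_qPochR_sq hq0 hq1, hpow, hthree, hfour, htwo]
  have := Real.rpow_pos_of_pos hq0 (1 / 4)
  field_simp

lemma qGamma_eighth_product (hq0 : 0 < q) (hq1 : q < 1) :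
    qGamma (q ^ 4) (1 / 8) * qGamma (q ^ 4) (3 / 8) * qGamma (q ^ 4) (5 / 8) *
        qGamma (q ^ 4) (7 / 8) =
      qPochR (q ^ 4) (q ^ 4) ^ 4 / qPochR √q q * (1 - q ^ 4) ^ 2 := by
  have h := prod_range_qGamma_add_div (pow_pos hq0 4) (pow_lt_one₀ hq0.le hq1 four_ne_zero)
    four_ne_zero (1 / 8)
  simp only [prod_range_succ, prod_range_zero, one_mul] at h
  rw [← Real.rpow_natCast_mul hq0.le, ← Real.rpow_natCast_mul hq0.le] at h
  norm_num at h
  rw [Real.sqrt_eq_rpow]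
  norm_num
  exact h

end QGammaProduct

lemma qPochR_exp_neg_pi_pow_four_div_pow_four :
    (qPochR (Real.exp (-Real.pi) ^ 4) (Real.exp (-Real.pi) ^ 4) ^ 4 /
        qPochR √(Real.exp (-Real.pi)) (Real.exp (-Real.pi))) ^ 4 =
      thetaThree (Real.exp (-Real.pi)) ^ 16 * 2 ^ (-57 / 4 : ℝ) * Real.exp (11 * Real.pi / 4) *
        (√2 + 1) := by
  have hb : 0 < thetaThree (-Real.exp (-Real.pi)) :=
    thetaThree_pos (by rw [abs_neg]; exact abs_exp_neg_pi_lt_one)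
  have hab := thetaThree_exp_neg_pi_eq_rpow_mul
  have hsq := thetaThree_exp_neg_pi_sq
  have hexp : Real.exp (-Real.pi) ^ (11 / 4 : ℝ) = (Real.exp (11 * Real.pi / 4))⁻¹ := by
    rw [← Real.exp_mul, ← Real.exp_neg]
    ring_nf
  have htwo : (2 : ℝ) ^ (-57 / 4 : ℝ) = (2 ^ (13 / 4 : ℝ) * 2 ^ 11)⁻¹ := by
    rw [← Real.rpow_natCast, ← Real.rpow_add two_pos, ← Real.rpow_neg zero_le_two]
    norm_num
  rw [qPochR_pow_four_div_pow_four (Real.exp_pos _) exp_neg_pi_lt_one, thetaTwo_exp_neg_pi, hexp,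
    htwo]
  set a := thetaThree (Real.exp (-Real.pi))
  set b := thetaThree (-Real.exp (-Real.pi))
  have hpow : a ^ 13 = 2 ^ (13 / 4 : ℝ) * b ^ 13 := by
    rw [hab, mul_pow, ← Real.rpow_mul_natCast zero_le_two]
    norm_num
  have hsub : a ^ 2 - b ^ 2 = b ^ 2 * (√2 + 1)⁻¹ := by
    field_simp
    linear_combination (√2 + 1) * hsq + b ^ 2 * Real.sq_sqrt zero_le_two
  rw [hsub, show a ^ 16 = a ^ 3 * a ^ 13 by ring, hpow]
  field_simp

lemma qPochR_exp_neg_pi_pow_four_div :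
    qPochR (Real.exp (-Real.pi) ^ 4) (Real.exp (-Real.pi) ^ 4) ^ 4 /
        qPochR √(Real.exp (-Real.pi)) (Real.exp (-Real.pi)) =
      thetaThree (Real.exp (-Real.pi)) ^ 4 * 2 ^ (-57 / 16 : ℝ) * Real.exp (11 * Real.pi / 16) *
        (√2 + 1) ^ (1 / 4 : ℝ) := by
  have hpos := thetaThree_pos abs_exp_neg_pi_lt_one
  have hpow := abs_pow_lt_one abs_exp_neg_pi_lt_one four_ne_zero
  have hnum := qPochR_pos hpow hpow
  have hden := qPochR_pos (abs_sqrt_lt_one exp_neg_pi_lt_one) abs_exp_neg_pi_lt_one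
  refine (pow_left_inj₀ (by positivity) (by positivity) four_ne_zero).1 ?_
  have htwo : ((2 : ℝ) ^ (-57 / 16 : ℝ)) ^ 4 = 2 ^ (-57 / 4 : ℝ) := by
    rw [← Real.rpow_mul_natCast zero_le_two]
    norm_num
  have hexp : Real.exp (11 * Real.pi / 16) ^ 4 = Real.exp (11 * Real.pi / 4) := by
    rw [← Real.exp_nat_mul]
    ring_nf
  have hroot : ((√2 + 1) ^ (1 / 4 : ℝ)) ^ 4 = √2 + 1 := by
    rw [← Real.rpow_mul_natCast (by positivity)]
    norm_num
  rw [qPochR_exp_neg_pi_pow_four_div_pow_four, mul_pow, mul_pow, mul_pow, ← pow_mul, htwo, hexp,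
    hroot]

theorem qGamma_eighth_product_exp_four_pi
    (q : ℝ) (hq : q = Real.exp (-4 * Real.pi))
    (a : ℝ) (ha : a = Real.pi ^ ((1 : ℝ) / 4) / Real.Gamma (3 / 4)) :
    qGamma q (1 / 8) * qGamma q (3 / 8) * qGamma q (5 / 8) * qGamma q (7 / 8) =
      (1 - Real.exp (-4 * Real.pi)) ^ 2 * a ^ 4 * (2 : ℝ) ^ (-(57 : ℝ) / 16) *
        Real.exp (11 * Real.pi / 16) * (Real.sqrt 2 + 1) ^ ((1 : ℝ) / 4) := by
  have hexp : Real.exp (-4 * Real.pi) = Real.exp (-Real.pi) ^ 4 := by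
    rw [← Real.exp_nat_mul]
    ring_nf
  rw [hq, ha, ← thetaThree_exp_neg_pi, hexp,
    qGamma_eighth_product (Real.exp_pos _) exp_neg_pi_lt_one, qPochR_exp_neg_pi_pow_four_div]
  ring
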